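/- arXiv:1801.01336 — 7 statements merged into one kernel-verified Lean document; each statement's English description precedes it below -/
import Mathlib

section
/- Let Δ ≥ 4 be an even integer and let t be an integer with 1 ≤ t ≤ Δ−2. For every proper edge-coloring c of the multigraph H^Δ_t and every index j ∈ {0,…,Δ−1}, the palettes of the two matched non-central vertices are distinct: P_c(v_j) ≠ P_c(v_{j'}), where j' denotes the partner of j. -/
/-- A proper edge-coloring of a multigraph given by an edge-index type `E`,
a vertex type `V` and an endpoints map `ends : E → Sym2 V`: distinct edges
sharing an endpoint receive distinct colors. -/
def MG.Proper {E V C : Type*} (ends : E → Sym2 V) (c : E → C) : Prop :=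
  ∀ e₁ e₂ : E, e₁ ≠ e₂ → (∃ x : V, x ∈ ends e₁ ∧ x ∈ ends e₂) → c e₁ ≠ c e₂

/-- The palette of a vertex: the set of colors of the edges incident with it. -/
def MG.palette {E V C : Type*} (ends : E → Sym2 V) (c : E → C) (x : V) : Set C :=
  {γ : C | ∃ e : E, x ∈ ends e ∧ c e = γ}

/-- The multigraph `H^Δ_t`: vertices are `none` (the center `u`) and `some j`
(the vertex `v_j`), edges are the spokes `e_j = u v_j` together with `t`
parallel edges between `v_{2i}` and `v_{2i+1}`. -/
def Hends (Δ t : ℕ) : (Fin Δ ⊕ Fin (Δ / 2) × Fin t) → Sym2 (Option (Fin Δ))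
  | Sum.inl j => s(none, some j)
  | Sum.inr (i, _) =>
      s(some ⟨2 * i.1, by have := i.2; omega⟩, some ⟨2 * i.1 + 1, by have := i.2; omega⟩)

/-- The partner `j'` of an index `j`: `j+1` if `j` is even, `j-1` if `j` is odd. -/
def partner {Δ : ℕ} (hΔ : 2 ∣ Δ) (j : Fin Δ) : Fin Δ :=
  ⟨if j.1 % 2 = 0 then j.1 + 1 else j.1 - 1, by
    obtain ⟨k, hk⟩ := hΔ; have := j.2; split <;> omega⟩

/-- for every proper edge-coloring of `H^Δ_t` (Δ ≥ 4 even,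
1 ≤ t ≤ Δ−2) and every index `j`, the palettes of the matched non-central
vertices `v_j` and `v_{j'}` are distinct. -/
theorem palettes_of_matched_vertices_distinct {Δ t : ℕ} (hΔ : 4 ≤ Δ) (hev : 2 ∣ Δ)
    (ht1 : 1 ≤ t) (ht2 : t ≤ Δ - 2) {C : Type*}
    (c : (Fin Δ ⊕ Fin (Δ / 2) × Fin t) → C) (hc : MG.Proper (Hends Δ t) c)
    (j : Fin Δ) :
    MG.palette (Hends Δ t) c (some j) ≠ MG.palette (Hends Δ t) c (some (partner hev j)) := by
  intro h
  have hm : c (Sum.inl j) ∈ MG.palette (Hends Δ t) c (some j) :=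
    ⟨Sum.inl j, by simp [Hends], rfl⟩
  rw [h] at hm
  obtain ⟨e, he, hce⟩ := hm
  rcases e with k | ⟨i, s⟩
  · have hk : partner hev j = k := by simpa [Hends] using he
    have hne : k ≠ j := by
      rintro rfl
      have := congrArg Fin.val hk
      simp only [partner] at this
      split at this <;> omega
    exact hc (Sum.inl k) (Sum.inl j) (by simpa using hne)
      ⟨none, by simp [Hends], by simp [Hends]⟩ hce
  · refine hc (Sum.inr (i, s)) (Sum.inl j) (by simp) ⟨some j, ?_, by simp [Hends]⟩ hce
    simp only [Hends, Sym2.mem_iff, Option.some.injEq, Fin.ext_iff, partner] at he ⊢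
    split at he <;> omega
end

section
/- Let Δ ≥ 4 be an even integer and let t be an integer with 1 ≤ t ≤ Δ−2. Let c be a proper edge-coloring of the multigraph H^Δ_t. Then for every j the color c(e_j) of the spoke at v_j does not belong to P_c(v_{j'}); moreover, if h ≠ j is an index with P_c(v_j) = P_c(v_h), then c(e_j) belongs to P_c(v_{h'}). -/
theorem partner_mem_aux {Δ t : ℕ} (hev : 2 ∣ Δ) (j : Fin Δ) (p : Fin (Δ / 2) × Fin t)
    (hj : some j ∈ Hends Δ t (Sum.inr p)) :
    some (partner hev j) ∈ Hends Δ t (Sum.inr p) := by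
  obtain ⟨i, s⟩ := p
  simp only [Hends, Sym2.mem_iff, Option.some.injEq, Fin.ext_iff, partner] at hj ⊢
  split <;> omega

theorem partner_partner_aux {Δ : ℕ} (hev : 2 ∣ Δ) (j : Fin Δ) :
    partner hev (partner hev j) = j := by
  simp only [Fin.ext_iff, partner]
  split <;> split <;> omega

theorem partner_ne_aux {Δ : ℕ} (hev : 2 ∣ Δ) (j : Fin Δ) : partner hev j ≠ j := by
  simp only [ne_eq, Fin.ext_iff, partner]
  split <;> omega

/-- the color of the spoke `e_j` does not belong to the palette of
`v_{j'}`; and if `h ≠ j` has the same palette as `v_j`, then the color of `e_j`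
belongs to the palette of `v_{h'}`. -/
theorem spoke_color_not_in_partner_palette {Δ t : ℕ} (hΔ : 4 ≤ Δ) (hev : 2 ∣ Δ)
    (ht1 : 1 ≤ t) (ht2 : t ≤ Δ - 2) {C : Type*}
    (c : (Fin Δ ⊕ Fin (Δ / 2) × Fin t) → C) (hc : MG.Proper (Hends Δ t) c)
    (j : Fin Δ) :
    c (Sum.inl j) ∉ MG.palette (Hends Δ t) c (some (partner hev j)) ∧
    ∀ h : Fin Δ, h ≠ j →
      MG.palette (Hends Δ t) c (some j) = MG.palette (Hends Δ t) c (some h) →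
      c (Sum.inl j) ∈ MG.palette (Hends Δ t) c (some (partner hev h)) := by
  have key : ∀ k : Fin Δ, k ≠ j → c (Sum.inl k) ≠ c (Sum.inl j) := fun k hk =>
    hc _ _ (by simpa using hk) ⟨none, by simp [Hends], by simp [Hends]⟩
  constructor
  · rintro ⟨e, he, hce⟩
    rcases e with k | p
    · have hk : partner hev j = k := by simpa [Hends] using he
      exact key k (hk ▸ partner_ne_aux hev j) hce
    · have h1 := partner_mem_aux hev _ p he
      rw [partner_partner_aux] at h1
      exact hc _ _ (by simp) ⟨some j, h1, by simp [Hends]⟩ hce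
  · intro h hh hP
    have hm : c (Sum.inl j) ∈ MG.palette (Hends Δ t) c (some h) := by
      rw [← hP]
      exact ⟨Sum.inl j, by simp [Hends], rfl⟩
    obtain ⟨e, he, hce⟩ := hm
    rcases e with k | p
    · have hk : h = k := by simpa [Hends] using he
      exact absurd hce (key k (hk ▸ hh))
    · exact ⟨Sum.inr p, partner_mem_aux hev _ p he, hce⟩
end

section
/- Let Δ ≥ 4 be an even integer and let t be an integer with 1 ≤ t ≤ Δ−2. Let c be a proper edge-coloring of the multigraph H^Δ_t. Define a simple graph Γ whose vertices are the palettes P_c(v_j) for j ∈ {0,…,Δ−1}, with two palettes P ≠ Q adjacent if and only if there exists an even index j with {P, Q} = {P_c(v_j), P_c(v_{j+1})}. Then Γ is acyclic, i.e. Γ is a forest. -/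
theorem mem_pal_inl {Δ t : ℕ} {C : Type*} (c : (Fin Δ ⊕ Fin (Δ / 2) × Fin t) → C) (j : Fin Δ) :
    c (Sum.inl j) ∈ MG.palette (Hends Δ t) c (some j) :=
  ⟨Sum.inl j, by simp [Hends], rfl⟩

theorem not_mem_pal {Δ t : ℕ} (hev : 2 ∣ Δ) {C : Type*}
    (c : (Fin Δ ⊕ Fin (Δ / 2) × Fin t) → C) (hc : MG.Proper (Hends Δ t) c)
    (j : Fin Δ) (hj : j.1 % 2 = 0) :
    c (Sum.inl j) ∉ MG.palette (Hends Δ t) c (some (partner hev j)) := by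
  rintro ⟨e, he, hce⟩
  rcases e with k | ⟨i, s⟩
  · simp only [Hends, Sym2.mem_iff, Option.some.injEq, reduceCtorEq, false_or] at he
    have hne : k ≠ j := by
      intro h
      have h2 := congrArg Fin.val (he.trans h)
      simp [partner, hj] at h2
    exact hc (Sum.inl k) (Sum.inl j) (by simpa using hne) ⟨none, by simp [Hends], by simp [Hends]⟩ hce
  · refine hc (Sum.inr (i, s)) (Sum.inl j) (by simp) ⟨some j, ?_, by simp [Hends]⟩ hce
    simp only [Hends, Sym2.mem_iff, Option.some.injEq, Fin.ext_iff, partner, hj, if_true] at he ⊢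
    omega

theorem mem_pal_iff {Δ t : ℕ} (hev : 2 ∣ Δ) {C : Type*}
    (c : (Fin Δ ⊕ Fin (Δ / 2) × Fin t) → C)
    (j : Fin Δ) (hj : j.1 % 2 = 0) (x : C) (h1 : x ≠ c (Sum.inl j))
    (h2 : x ≠ c (Sum.inl (partner hev j))) :
    x ∈ MG.palette (Hends Δ t) c (some j) ↔
      x ∈ MG.palette (Hends Δ t) c (some (partner hev j)) := by
  constructor
  · rintro ⟨e, he, hce⟩
    rcases e with k | ⟨i, s⟩
    · simp only [Hends, Sym2.mem_iff, Option.some.injEq, reduceCtorEq, false_or] at he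
      subst he
      exact absurd hce.symm h1
    · refine ⟨Sum.inr (i, s), ?_, hce⟩
      simp only [Hends, Sym2.mem_iff, Option.some.injEq, Fin.ext_iff, partner, hj, if_true] at he ⊢
      omega
  · rintro ⟨e, he, hce⟩
    rcases e with k | ⟨i, s⟩
    · simp only [Hends, Sym2.mem_iff, Option.some.injEq, reduceCtorEq, false_or] at he
      subst he
      exact absurd hce.symm h2
    · refine ⟨Sum.inr (i, s), ?_, hce⟩
      simp only [Hends, Sym2.mem_iff, Option.some.injEq, Fin.ext_iff, partner, hj, if_true] at he ⊢
      omega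

/-- the simple graph `Γ` on the palettes of the non-central
vertices of `H^Δ_t`, where two distinct palettes `P ≠ Q` are adjacent iff
`{P, Q} = {P_c(v_j), P_c(v_{j+1})}` for some even index `j`, is a forest. -/
theorem palette_graph_isAcyclic {Δ t : ℕ} (hΔ : 4 ≤ Δ) (hev : 2 ∣ Δ)
    (ht1 : 1 ≤ t) (ht2 : t ≤ Δ - 2) {C : Type*}
    (c : (Fin Δ ⊕ Fin (Δ / 2) × Fin t) → C) (hc : MG.Proper (Hends Δ t) c) :
    (SimpleGraph.fromRel
      (fun P Q : {P : Set C // ∃ j : Fin Δ, MG.palette (Hends Δ t) c (some j) = P} =>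
        ∃ j : Fin Δ, j.1 % 2 = 0 ∧
          P.1 = MG.palette (Hends Δ t) c (some j) ∧
          Q.1 = MG.palette (Hends Δ t) c (some (partner hev j)))).IsAcyclic := by
  have spoke : ∀ j k : Fin Δ, j ≠ k → c (Sum.inl j) ≠ c (Sum.inl k) := fun j k hjk =>
    hc _ _ (by simpa using hjk) ⟨none, by simp [Hends], by simp [Hends]⟩
  have step : ∀ j k : Fin Δ, j.1 % 2 = 0 → k.1 % 2 = 0 → j ≠ k →
      (c (Sum.inl j) ∈ MG.palette (Hends Δ t) c (some k) ↔
        c (Sum.inl j) ∈ MG.palette (Hends Δ t) c (some (partner hev k))) := by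
    intro j k hj hk hjk
    refine mem_pal_iff hev c k hk _ (spoke _ _ hjk) (spoke _ _ ?_)
    intro h
    have h2 := congrArg Fin.val h
    simp only [partner, hk, if_true] at h2
    omega
  rw [SimpleGraph.isAcyclic_iff_forall_adj_isBridge]
  intro P Q hPQ
  rw [SimpleGraph.isBridge_iff]
  -- the spoke color of the first endpoint separates the two sides
  obtain ⟨j, hj, hjPQ⟩ : ∃ j : Fin Δ, j.1 % 2 = 0 ∧
      ((P.1 = MG.palette (Hends Δ t) c (some j) ∧
          Q.1 = MG.palette (Hends Δ t) c (some (partner hev j))) ∨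
        (Q.1 = MG.palette (Hends Δ t) c (some j) ∧
          P.1 = MG.palette (Hends Δ t) c (some (partner hev j)))) := by
    rw [SimpleGraph.fromRel_adj] at hPQ
    rcases hPQ with ⟨-, ⟨j, hj, h⟩ | ⟨j, hj, h⟩⟩
    · exact ⟨j, hj, Or.inl h⟩
    · exact ⟨j, hj, Or.inr h⟩
  have inA := mem_pal_inl c j
  have outB := not_mem_pal hev c hc j hj
  intro hreach
  have key : c (Sum.inl j) ∈ P.1 ↔ c (Sum.inl j) ∈ Q.1 := by
    obtain ⟨w⟩ := hreach
    have edge : ∀ R S : {P : Set C // ∃ j : Fin Δ, MG.palette (Hends Δ t) c (some j) = P},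
        (∃ j : Fin Δ, j.1 % 2 = 0 ∧ R.1 = MG.palette (Hends Δ t) c (some j) ∧
          S.1 = MG.palette (Hends Δ t) c (some (partner hev j))) →
        s(R, S) ≠ s(P, Q) → (c (Sum.inl j) ∈ R.1 ↔ c (Sum.inl j) ∈ S.1) := by
      rintro R S ⟨k, hk, hR, hS⟩ hne
      by_cases hjk : j = k
      · subst hjk
        exfalso
        apply hne
        rw [Sym2.eq_iff]
        rcases hjPQ with ⟨h1, h2⟩ | ⟨h1, h2⟩
        · exact Or.inl ⟨Subtype.ext (hR.trans h1.symm), Subtype.ext (hS.trans h2.symm)⟩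
        · exact Or.inr ⟨Subtype.ext (hR.trans h1.symm), Subtype.ext (hS.trans h2.symm)⟩
      · rw [hR, hS]
        exact step j k hj hk hjk
    have walk : ∀ R S, (SimpleGraph.deleteEdges (SimpleGraph.fromRel
      (fun P Q : {P : Set C // ∃ j : Fin Δ, MG.palette (Hends Δ t) c (some j) = P} =>
        ∃ j : Fin Δ, j.1 % 2 = 0 ∧
          P.1 = MG.palette (Hends Δ t) c (some j) ∧
          Q.1 = MG.palette (Hends Δ t) c (some (partner hev j)))) {s(P, Q)}).Walk R S →
        (c (Sum.inl j) ∈ R.1 ↔ c (Sum.inl j) ∈ S.1) := by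
      intro R S w
      induction w with
      | nil => rfl
      | cons h _ ih =>
        rw [SimpleGraph.deleteEdges_adj, SimpleGraph.fromRel_adj] at h
        obtain ⟨⟨-, h | h⟩, hne⟩ := h
        · exact (edge _ _ h hne).trans ih
        · exact (edge _ _ h (by rw [Sym2.eq_swap]; exact hne)).symm.trans ih
    exact walk _ _ w
  rcases hjPQ with ⟨h1, h2⟩ | ⟨h1, h2⟩
  · rw [h1, h2] at key
    exact outB (key.1 inA)
  · rw [h1, h2] at key
    exact outB (key.2 inA)
end

section
/- Let Δ ≥ 4 be an even integer and let t be an integer with 1 ≤ t ≤ Δ−2. Then for every proper edge-coloring c of the multigraph H^Δ_t, the number of distinct palettes occurring among the vertices of H^Δ_t is strictly greater than Δ/2 + 1. Consequently the palette index of H^Δ_t satisfies š(H^Δ_t) > Δ/2 + 1. -/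
/-- The palette index of a multigraph: the minimum, over all proper
edge-colorings with colors in ℕ, of the number of distinct palettes. -/
noncomputable def paletteIndex {E V : Type*} (ends : E → Sym2 V) : ℕ :=
  sInf {n : ℕ | ∃ c : E → ℕ, MG.Proper ends c ∧
    {P : Set ℕ | ∃ x : V, MG.palette ends c x = P}.ncard = n}

/-- The multigraph `G^Δ`: the disjoint union of the multigraphs `H^Δ_t`
for `t = 1, …, Δ−2` (the component indexed by `t : Fin (Δ-2)` is
`H^Δ_{t+1}`). -/
def Gends (Δ : ℕ) :
    (Σ t : Fin (Δ - 2), (Fin Δ ⊕ Fin (Δ / 2) × Fin (t.1 + 1))) →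
      Sym2 (Fin (Δ - 2) × Option (Fin Δ))
  | ⟨t, e⟩ => (Hends Δ (t.1 + 1) e).map (fun v => (t, v))

/-- Linear-algebra counting lemma. -/
lemma card_lower {n : ℕ} {N : Type*} [Fintype N] (a b : Fin n → N) (u v : N)
    (g : Fin n → N → ℚ) (h : N → ℚ)
    (hg : ∀ i k, g i (a k) - g i (b k) = if i = k then 1 else 0)
    (ha : ∀ k, h (a k) = 0) (hb : ∀ k, h (b k) = 0) (hu : h u = 1) (hv : h v = 0) :
    n + 2 ≤ Fintype.card N := by
  let L : ((Fin n → ℚ) × ℚ × ℚ) →ₗ[ℚ] (N → ℚ) :=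
    { toFun := fun x P => ∑ i, x.1 i * g i P + x.2.1 * h P + x.2.2
      map_add' := by
        intro x y; funext P
        simp [add_mul, Finset.sum_add_distrib]; ring
      map_smul' := by
        intro r x; funext P
        simp [mul_add, Finset.mul_sum, mul_assoc] }
  have hL : Function.Injective L := by
    rw [injective_iff_map_eq_zero]
    rintro ⟨x, y, z⟩ h0
    have key : ∀ P, ∑ i, x i * g i P + y * h P + z = 0 := fun P => congrFun h0 P
    have hx : x = 0 := by
      funext k
      have h1 := key (a k)
      have h2 := key (b k)
      rw [ha] at h1
      rw [hb] at h2
      have h3 : ∑ i, x i * (g i (a k) - g i (b k)) = 0 := by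
        simp only [mul_sub, Finset.sum_sub_distrib]; linarith
      simpa [hg] using h3
    subst hx
    have h1 := key u
    have h2 := key v
    simp [hu, hv] at h1 h2
    subst h2
    simp at h1
    simp [h1]
  have := LinearMap.finrank_le_finrank_of_injective hL
  simp at this
  omega

lemma mem_none_inl {Δ t : ℕ} (k : Fin Δ) : none ∈ Hends Δ t (Sum.inl k) := by
  simp [Hends]

lemma mem_some_inl {Δ t : ℕ} (j k : Fin Δ) : some j ∈ Hends Δ t (Sum.inl k) ↔ j = k := by
  simp [Hends]

lemma mem_some_inr {Δ t : ℕ} (j : Fin Δ) (p : Fin (Δ / 2) × Fin t) :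
    some j ∈ Hends Δ t (Sum.inr p) ↔ j.1 / 2 = p.1.1 := by
  obtain ⟨i, s⟩ := p
  simp [Hends, Fin.ext_iff]
  omega

lemma mem_palette_some {Δ t : ℕ} {C : Type*} (c : (Fin Δ ⊕ Fin (Δ / 2) × Fin t) → C)
    (j : Fin Δ) (γ : C) : γ ∈ MG.palette (Hends Δ t) c (some j) ↔
      c (Sum.inl j) = γ ∨ ∃ (i : Fin (Δ / 2)) (s : Fin t), j.1 / 2 = i.1 ∧
        c (Sum.inr (i, s)) = γ := by
  constructor
  · rintro ⟨e | ⟨i, s⟩, he, rfl⟩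
    · rw [mem_some_inl] at he
      subst he; exact Or.inl rfl
    · rw [mem_some_inr] at he
      exact Or.inr ⟨i, s, he, rfl⟩
  · rintro (h | ⟨i, s, h, h'⟩)
    · exact ⟨_, (mem_some_inl _ _).2 rfl, h⟩
    · exact ⟨_, (mem_some_inr _ _).2 h, h'⟩

lemma palette_ne {Δ t : ℕ} {C : Type*} (hev : 2 ∣ Δ) (htΔ : t + 1 < Δ)
    (c : (Fin Δ ⊕ Fin (Δ / 2) × Fin t) → C) (hinj : Function.Injective fun j => c (Sum.inl j))
    (j : Fin Δ) : MG.palette (Hends Δ t) c (some j) ≠ MG.palette (Hends Δ t) c none := by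
  classical
  intro he
  have hj : j.1 / 2 < Δ / 2 := by have := j.2; omega
  have hsub : Finset.univ.image (fun k => c (Sum.inl k)) ⊆
      insert (c (Sum.inl j))
        (Finset.univ.image (fun s : Fin t => c (Sum.inr (⟨j.1 / 2, hj⟩, s)))) := by
    intro γ hγ
    simp only [Finset.mem_image, Finset.mem_univ, true_and] at hγ
    obtain ⟨k, hk⟩ := hγ
    have h1 : γ ∈ MG.palette (Hends Δ t) c none := ⟨_, mem_none_inl k, hk⟩
    rw [← he, mem_palette_some] at h1
    rcases h1 with h1 | ⟨i, s, hi, h1⟩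
    · simp [h1]
    · have : i = ⟨j.1 / 2, hj⟩ := Fin.ext hi.symm
      subst this
      simp only [Finset.mem_insert, Finset.mem_image, Finset.mem_univ, true_and]
      exact Or.inr ⟨s, h1⟩
  have h1 := Finset.card_le_card hsub
  rw [Finset.card_image_of_injective _ hinj] at h1
  have h2 := Finset.card_insert_le (c (Sum.inl j))
    (Finset.univ.image (fun s : Fin t => c (Sum.inr (⟨j.1 / 2, hj⟩, s))))
  have h3 := Finset.card_image_le (s := Finset.univ)
    (f := fun s : Fin t => c (Sum.inr (⟨j.1 / 2, hj⟩, s)))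
  simp only [Finset.card_univ, Fintype.card_fin] at h1 h3
  omega

lemma palettes_lower {Δ t : ℕ} (hΔ : 4 ≤ Δ) (hev : 2 ∣ Δ) (ht2 : t ≤ Δ - 2)
    {C : Type*} (c : (Fin Δ ⊕ Fin (Δ / 2) × Fin t) → C) (hc : MG.Proper (Hends Δ t) c) :
    Δ / 2 + 1 <
      {P : Set C | ∃ x : Option (Fin Δ), MG.palette (Hends Δ t) c x = P}.ncard := by
  classical
  have hinj : Function.Injective fun j => c (Sum.inl j) := by
    intro j k hjk
    by_contra hne
    exact hc (Sum.inl j) (Sum.inl k) (by simpa using hne)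
      ⟨none, mem_none_inl j, mem_none_inl k⟩ hjk
  have hS : {P : Set C | ∃ x : Option (Fin Δ), MG.palette (Hends Δ t) c x = P} =
    Set.range (MG.palette (Hends Δ t) c) := rfl
  rw [hS]
  let S := Set.range (MG.palette (Hends Δ t) c)
  haveI : Fintype S := Fintype.ofFinite _
  let p : Option (Fin Δ) → S := fun x => ⟨MG.palette (Hends Δ t) c x, x, rfl⟩
  let ev : Fin (Δ / 2) → Fin Δ := fun i => ⟨2 * i.1, by have := i.2; omega⟩
  let od : Fin (Δ / 2) → Fin Δ := fun i => ⟨2 * i.1 + 1, by have := i.2; omega⟩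
  have hne := palette_ne hev (by omega) c hinj
  have key := card_lower (fun i => p (some (ev i))) (fun i => p (some (od i)))
    (p none) (p (some ⟨0, by omega⟩))
    (fun i P => if c (Sum.inl (ev i)) ∈ P.1 then (1 : ℚ) else 0)
    (fun P => if P.1 = MG.palette (Hends Δ t) c none then (1 : ℚ) else 0)
    ?_ (fun k => by simp [p, hne]) (fun k => by simp [p, hne]) (by simp [p])
    (by simp [p, hne])
  · have h2 : (Set.range (MG.palette (Hends Δ t) c)).ncard = Fintype.card S := by
      rw [← Nat.card_coe_set_eq, ← Nat.card_eq_fintype_card]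
    omega
  · intro i k
    simp only [p, mem_palette_some]
    have e1 : (c (Sum.inl (ev k)) = c (Sum.inl (ev i))) ↔ i = k := by
      constructor
      · intro h
        have := congrArg Fin.val (hinj h)
        simp only [ev] at this
        exact Fin.ext (by omega)
      · rintro rfl; rfl
    have e2 : ¬ (c (Sum.inl (od k)) = c (Sum.inl (ev i))) := by
      intro h
      have := congrArg Fin.val (hinj h)
      simp only [ev, od] at this
      omega
    have d1 : (ev k).1 / 2 = k.1 := by simp only [ev]; omega
    have d2 : (od k).1 / 2 = k.1 := by simp only [od]; omega
    rw [e1, d1, d2]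
    by_cases hik : i = k
    · subst hik
      have e3 : ¬ ∃ (i' : Fin (Δ / 2)) (s : Fin t), i.1 = i'.1 ∧
          c (Sum.inr (i', s)) = c (Sum.inl (ev i)) := by
        rintro ⟨i', s, hi, h⟩
        exact hc _ _ (by simp) ⟨some (ev i), (mem_some_inr _ _).2 (d1.trans hi),
          (mem_some_inl _ _).2 rfl⟩ h
      simp only [e2, e3]
      simp
    · simp only [hik, e2, false_or, sub_self, if_false]

/-- every proper edge-coloring of `H^Δ_t` (Δ ≥ 4 even,
1 ≤ t ≤ Δ−2) has more than `Δ/2 + 1` distinct palettes; consequently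
`š(H^Δ_t) > Δ/2 + 1`. -/
theorem paletteIndex_H_lower_bound {Δ t : ℕ} (hΔ : 4 ≤ Δ) (hev : 2 ∣ Δ)
    (ht1 : 1 ≤ t) (ht2 : t ≤ Δ - 2) :
    (∀ {C : Type*} (c : (Fin Δ ⊕ Fin (Δ / 2) × Fin t) → C),
      MG.Proper (Hends Δ t) c →
      Δ / 2 + 1 <
        {P : Set C | ∃ x : Option (Fin Δ), MG.palette (Hends Δ t) c x = P}.ncard) ∧
    Δ / 2 + 1 < paletteIndex (Hends Δ t) := by
  refine ⟨fun c hc => palettes_lower hΔ hev ht2 c hc, ?_⟩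
  have hne : {n : ℕ | ∃ c : (Fin Δ ⊕ Fin (Δ / 2) × Fin t) → ℕ, MG.Proper (Hends Δ t) c ∧
      {P : Set ℕ | ∃ x : Option (Fin Δ), MG.palette (Hends Δ t) c x = P}.ncard = n}.Nonempty :=
    ⟨_, Encodable.encode, fun e₁ e₂ h _ h' => h (Encodable.encode_injective h'), rfl⟩
  obtain ⟨c, hc, h⟩ := Nat.sInf_mem hne
  unfold paletteIndex
  rw [← h]
  exact palettes_lower hΔ hev ht2 c hc
end

section
/- Let Δ ≥ 4 be an even integer and let G^Δ be the disjoint union of the multigraphs H^Δ_t for t = 1, 2, …, Δ−2. Then the palette index of G^Δ satisfies (Δ/2)·(Δ−2) < š(G^Δ) < (Δ+1)·(Δ−2). In particular, G^Δ is a multigraph with maximum degree Δ whose palette index is bounded below by a quadratic polynomial in Δ. -/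
namespace PIdx

lemma mem_spoke {Δ : ℕ} (t : Fin (Δ - 2)) (j : Fin Δ) (x : Fin (Δ - 2) × Option (Fin Δ)) :
    x ∈ Gends Δ ⟨t, Sum.inl j⟩ ↔ x = (t, none) ∨ x = (t, some j) := by
  simp [Gends, Hends]

lemma mem_par {Δ : ℕ} (t : Fin (Δ - 2)) (i : Fin (Δ / 2)) (k : Fin (t.1 + 1))
    (x : Fin (Δ - 2) × Option (Fin Δ)) :
    x ∈ Gends Δ ⟨t, Sum.inr (i, k)⟩ ↔
      ∃ j : Fin Δ, x = (t, some j) ∧ j.1 / 2 = i.1 := by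
  simp only [Gends, Hends, Sym2.map_mk, Sym2.mem_iff]
  constructor
  · rintro (rfl | rfl)
    · exact ⟨_, rfl, by simp⟩
    · exact ⟨_, rfl, by simp; omega⟩
  · rintro ⟨j, rfl, h⟩
    simp only [Prod.mk.injEq, true_and, Option.some.injEq, Fin.ext_iff]
    omega

/-- The edges at the vertex `v_j`. -/
def inc {Δ : ℕ} (hev : 2 ∣ Δ) (t : Fin (Δ - 2)) (j : Fin Δ) :
    Option (Fin (t.1 + 1)) → (Σ t : Fin (Δ - 2), (Fin Δ ⊕ Fin (Δ / 2) × Fin (t.1 + 1)))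
  | none => ⟨t, Sum.inl j⟩
  | some k => ⟨t, Sum.inr (⟨j.1 / 2, by have := j.2; omega⟩, k)⟩

lemma palette_some {Δ : ℕ} (hev : 2 ∣ Δ) (c) (t : Fin (Δ - 2)) (j : Fin Δ) :
    MG.palette (C := ℕ) (Gends Δ) c (t, some j) = Set.range (fun o => c (inc hev t j o)) := by
  ext γ
  simp only [MG.palette, Set.mem_ofPred_eq, Set.mem_range]
  constructor
  · rintro ⟨⟨t', e | ⟨i, k⟩⟩, hx, rfl⟩
    · rw [mem_spoke] at hx
      simp only [Prod.mk.injEq, reduceCtorEq, and_false, false_or, Option.some.injEq] at hx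
      obtain ⟨rfl, rfl⟩ := hx
      exact ⟨none, rfl⟩
    · rw [mem_par] at hx
      obtain ⟨j', h, hi⟩ := hx
      simp only [Prod.mk.injEq, Option.some.injEq] at h
      obtain ⟨rfl, rfl⟩ := h
      have : i = ⟨j.1 / 2, by have := j.2; omega⟩ := Fin.ext hi.symm
      exact ⟨some k, by rw [this]; rfl⟩
  · rintro ⟨o | k, rfl⟩
    · exact ⟨_, by rw [inc, mem_spoke]; simp, rfl⟩
    · exact ⟨_, by rw [inc, mem_par]; exact ⟨j, rfl, rfl⟩, rfl⟩

lemma inc_mem {Δ : ℕ} (hev : 2 ∣ Δ) (t : Fin (Δ - 2)) (j : Fin Δ) (o) :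
    (t, some j) ∈ Gends Δ (inc hev t j o) := by
  cases o with
  | none => rw [inc, mem_spoke]; simp
  | some k => rw [inc, mem_par]; exact ⟨j, rfl, rfl⟩

lemma inc_inj {Δ : ℕ} (hev : 2 ∣ Δ) (t : Fin (Δ - 2)) (j : Fin Δ) :
    Function.Injective (inc hev t j) := by
  rintro (_ | a) (_ | b) h <;> simp [inc] at h ⊢
  exact h

lemma c_inj {Δ : ℕ} {c} (hc : MG.Proper (C := ℕ) (Gends Δ) c) (hev : 2 ∣ Δ) (t : Fin (Δ - 2))
    (j : Fin Δ) : Function.Injective (fun o => c (inc hev t j o)) := by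
  intro a b h
  by_contra hab
  exact hc _ _ (fun h' => hab (inc_inj hev t j h')) ⟨_, inc_mem hev t j a, inc_mem hev t j b⟩ h

lemma ncard_some {Δ : ℕ} {c} (hc : MG.Proper (C := ℕ) (Gends Δ) c) (hev : 2 ∣ Δ)
    (t : Fin (Δ - 2)) (j : Fin Δ) :
    (MG.palette (Gends Δ) c (t, some j)).ncard = t.1 + 2 := by
  rw [palette_some hev, ← Nat.card_coe_set_eq, Nat.card_range_of_injective (c_inj hc hev t j)]
  simp

lemma palette_none {Δ : ℕ} (c) (t : Fin (Δ - 2)) :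
    MG.palette (C := ℕ) (Gends Δ) c (t, none) = Set.range (fun j => c ⟨t, Sum.inl j⟩) := by
  ext γ
  simp only [MG.palette, Set.mem_ofPred_eq, Set.mem_range]
  constructor
  · rintro ⟨⟨t', e | ⟨i, k⟩⟩, hx, rfl⟩
    · rw [mem_spoke] at hx
      simp only [Prod.mk.injEq, reduceCtorEq, and_false, or_false, and_true] at hx
      subst hx
      exact ⟨e, rfl⟩
    · rw [mem_par] at hx
      obtain ⟨j', h, hi⟩ := hx
      simp at h
  · rintro ⟨j, rfl⟩
    exact ⟨_, by rw [mem_spoke]; simp, rfl⟩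

lemma spoke_inj {Δ : ℕ} {c} (hc : MG.Proper (C := ℕ) (Gends Δ) c) (t : Fin (Δ - 2)) :
    Function.Injective (fun j => c ⟨t, Sum.inl j⟩) := by
  intro a b h
  by_contra hab
  exact hc _ _ (fun h' => hab (by simpa using h'))
    ⟨(t, none), by rw [mem_spoke]; simp, by rw [mem_spoke]; simp⟩ h

lemma ncard_none {Δ : ℕ} {c} (hc : MG.Proper (C := ℕ) (Gends Δ) c) (t : Fin (Δ - 2)) :
    (MG.palette (Gends Δ) c (t, none)).ncard = Δ := by
  rw [palette_none, ← Nat.card_coe_set_eq, Nat.card_range_of_injective (spoke_inj hc t)]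
  simp

/-- `v_{2i}` -/
def ev {Δ : ℕ} (i : Fin (Δ / 2)) : Fin Δ := ⟨2 * i.1, by have := i.2; omega⟩
/-- `v_{2i+1}` -/
def od {Δ : ℕ} (i : Fin (Δ / 2)) : Fin Δ := ⟨2 * i.1 + 1, by have := i.2; omega⟩

lemma mem_palette_iff {Δ : ℕ} (hev : 2 ∣ Δ) (c) (t : Fin (Δ - 2)) (j : Fin Δ) (γ : ℕ) :
    γ ∈ MG.palette (C := ℕ) (Gends Δ) c (t, some j) ↔
      c ⟨t, Sum.inl j⟩ = γ ∨
      ∃ k, c ⟨t, Sum.inr (⟨j.1 / 2, by have := j.2; omega⟩, k)⟩ = γ := by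
  rw [palette_some hev]
  simp [Option.exists, inc]

lemma ev_mem {Δ : ℕ} {c} (hc : MG.Proper (C := ℕ) (Gends Δ) c) (hev : 2 ∣ Δ)
    (t : Fin (Δ - 2)) (i i' : Fin (Δ / 2)) :
    c ⟨t, Sum.inl (ev i')⟩ ∈ MG.palette (Gends Δ) c (t, some (ev i)) ↔
      i = i' ∨ c ⟨t, Sum.inl (ev i')⟩ ∈ MG.palette (Gends Δ) c (t, some (od i)) := by
  rw [mem_palette_iff hev, mem_palette_iff hev]
  have h1 : c ⟨t, Sum.inl (ev i)⟩ = c ⟨t, Sum.inl (ev i')⟩ ↔ i = i' := by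
    rw [(spoke_inj hc t).eq_iff (a := ev i) (b := ev i')]
    simp only [ev, Fin.ext_iff]; omega
  have h2 : ¬ c ⟨t, Sum.inl (od i)⟩ = c ⟨t, Sum.inl (ev i')⟩ := by
    rw [(spoke_inj hc t).eq_iff (a := od i) (b := ev i')]
    simp only [ev, od, Fin.ext_iff]; omega
  have e1 : (ev i).1 / 2 = i.1 := by simp [ev]
  have e2 : (od i).1 / 2 = i.1 := by simp only [od]; omega
  simp only [h1, h2, e1, e2, false_or]

lemma ev_not_mem {Δ : ℕ} {c} (hc : MG.Proper (C := ℕ) (Gends Δ) c) (hev : 2 ∣ Δ)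
    (t : Fin (Δ - 2)) (i : Fin (Δ / 2)) :
    c ⟨t, Sum.inl (ev i)⟩ ∉ MG.palette (Gends Δ) c (t, some (od i)) := by
  rw [mem_palette_iff hev]
  rintro (h | ⟨k, h⟩)
  · have := spoke_inj hc t h
    simp only [ev, od, Fin.ext_iff] at this; omega
  · refine hc _ _ ?_ ⟨(t, some (ev i)), ?_, ?_⟩ h
    · simp
    · rw [mem_par]; exact ⟨_, rfl, by simp only [ev, od]; omega⟩
    · rw [mem_spoke]; simp

open Classical in
/-- Test vector of a palette. -/
noncomputable def vec {Δ : ℕ}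
    (c : (Σ t : Fin (Δ - 2), (Fin Δ ⊕ Fin (Δ / 2) × Fin (t.1 + 1))) → ℕ) (P : Set ℕ) :
    Option (Fin (Δ - 2) × Fin (Δ / 2)) → ℚ
  | none => if P.ncard = Δ then 1 else 0
  | some (t, i) => if P.ncard = t.1 + 2 ∧ c ⟨t, Sum.inl (ev i)⟩ ∈ P then 1 else 0

lemma lower {Δ : ℕ} (hΔ : 4 ≤ Δ) (hev : 2 ∣ Δ) {c} (hc : MG.Proper (C := ℕ) (Gends Δ) c) :
    Δ / 2 * (Δ - 2) < {P : Set ℕ | ∃ x, MG.palette (Gends Δ) c x = P}.ncard := by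
  classical
  set S := {P : Set ℕ | ∃ x, MG.palette (Gends Δ) c x = P} with hS
  have hfin : S.Finite := Set.finite_range (MG.palette (Gends Δ) c)
  have himf : (vec c '' S).Finite := hfin.image _
  have hspan : Submodule.span ℚ (vec c '' S) = ⊤ := by
    have key : ∀ o, Pi.single o (1 : ℚ) ∈ Submodule.span ℚ (vec c '' S) := by
      have hv : ∀ x, vec c (MG.palette (Gends Δ) c x) ∈ Submodule.span ℚ (vec c '' S) :=
        fun x => Submodule.subset_span ⟨_, ⟨x, rfl⟩, rfl⟩
      rintro (_ | ⟨t, i⟩)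
      · have h0 : 0 < Δ - 2 := by omega
        convert hv (⟨0, h0⟩, none) using 1
        ext (_ | ⟨t, i⟩)
        · simp [vec, ncard_none hc]
        · have := t.2
          have h : ¬ Δ = t.1 + 2 := by omega
          simp [vec, ncard_none hc, h]
      · convert Submodule.sub_mem _ (hv (t, some (ev i))) (hv (t, some (od i))) using 1
        ext (_ | ⟨t', i'⟩)
        · simp [vec, ncard_some hc hev]
        · simp only [vec, ncard_some hc hev, Pi.sub_apply]
          by_cases ht : t = t'
          · subst ht
            rw [ev_mem hc hev]
            by_cases hi : i = i'
            · subst hi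
              simp [ev_not_mem hc hev]
            · have : (some (t, i')) ≠ some (t, i) := by simpa using fun h => hi h.symm
              simp [hi, Pi.single_eq_of_ne this]
          · have h1 : ¬ t.1 = t'.1 := fun h => ht (Fin.ext h)
            have : (some (t', i')) ≠ some (t, i) := by
              simpa using fun h => absurd h.symm ht
            simp [h1, Pi.single_eq_of_ne this]
    rw [eq_top_iff, ← (Pi.basisFun ℚ _).span_eq, Submodule.span_le]
    rintro _ ⟨o, rfl⟩
    simpa using key o
  have h1 := finrank_span_finset_le_card (R := ℚ) himf.toFinset
  rw [himf.coe_toFinset, Set.finrank, hspan, finrank_top, Module.finrank_fintype_fun_eq_card,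
    ← Set.ncard_eq_toFinset_card _ himf] at h1
  have h2 := Set.ncard_image_le hfin (f := vec c)
  simp only [Fintype.card_option, Fintype.card_prod, Fintype.card_fin] at h1
  rw [mul_comm]
  omega

/-- A coloring giving all centres the same palette. -/
def col (Δ : ℕ) : (Σ t : Fin (Δ - 2), (Fin Δ ⊕ Fin (Δ / 2) × Fin (t.1 + 1))) → ℕ
  | ⟨_, Sum.inl j⟩ => j.1
  | ⟨_, Sum.inr (_, k)⟩ => Δ + k.1

lemma col_proper (Δ : ℕ) : MG.Proper (Gends Δ) (col Δ) := by
  rintro ⟨t, j | ⟨i, k⟩⟩ ⟨t', j' | ⟨i', k'⟩⟩ hne ⟨x, hx, hx'⟩ h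
  · rw [mem_spoke] at hx hx'
    have ht : t = t' := by
      rcases hx with rfl | rfl <;> rcases hx' with h | h <;> exact (Prod.mk.inj h).1
    subst ht
    simp only [col] at h
    exact hne (by rw [Fin.ext h])
  · simp only [col] at h; omega
  · simp only [col] at h; omega
  · rw [mem_par] at hx hx'
    obtain ⟨a, rfl, ha⟩ := hx
    obtain ⟨b, hb, hb'⟩ := hx'
    simp only [Prod.mk.injEq, Option.some.injEq] at hb
    obtain ⟨rfl, rfl⟩ := hb
    have hi : i = i' := Fin.ext (by omega)
    subst hi
    simp only [col] at h
    have hk : k = k' := Fin.ext (by omega)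
    exact hne (by rw [hk])

lemma upper {Δ : ℕ} (hΔ : 4 ≤ Δ) :
    {P : Set ℕ | ∃ x, MG.palette (Gends Δ) (col Δ) x = P}.ncard < (Δ + 1) * (Δ - 2) := by
  have h : {P : Set ℕ | ∃ x, MG.palette (Gends Δ) (col Δ) x = P} =
      MG.palette (Gends Δ) (col Δ) '' Set.univ := by ext; simp
  have hcard : (Set.univ : Set (Fin (Δ - 2) × Option (Fin Δ))).ncard = (Δ + 1) * (Δ - 2) := by
    simp [Set.ncard_univ, mul_comm]
  rw [h, ← hcard]
  refine lt_of_le_of_ne (Set.ncard_image_le Set.finite_univ) fun heq => ?_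
  have hinj := Set.injOn_of_ncard_image_eq heq Set.finite_univ
  have := hinj (Set.mem_univ (⟨0, by omega⟩, none)) (Set.mem_univ (⟨1, by omega⟩, none))
    (by rw [palette_none, palette_none]; rfl)
  simp at this

end PIdx

/-- `(Δ/2)·(Δ−2) < š(G^Δ) < (Δ+1)·(Δ−2)` for even `Δ ≥ 4`. -/
theorem paletteIndex_G_bounds {Δ : ℕ} (hΔ : 4 ≤ Δ) (hev : 2 ∣ Δ) :
    Δ / 2 * (Δ - 2) < paletteIndex (Gends Δ) ∧
    paletteIndex (Gends Δ) < (Δ + 1) * (Δ - 2) := by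
  constructor
  · obtain ⟨c, hc, h⟩ := Nat.sInf_mem (s := {n : ℕ | ∃ c, MG.Proper (Gends Δ) c ∧
      {P : Set ℕ | ∃ x, MG.palette (Gends Δ) c x = P}.ncard = n})
      ⟨_, PIdx.col Δ, PIdx.col_proper Δ, rfl⟩
    have := PIdx.lower hΔ hev hc
    rw [h] at this
    exact this
  · exact lt_of_le_of_lt (Nat.sInf_le ⟨PIdx.col Δ, PIdx.col_proper Δ, rfl⟩) (PIdx.upper hΔ)
end

section
/- Let Δ ≥ 4 be an even integer and let G^Δ be the disjoint union of the multigraphs H^Δ_t for t = 1, 2, …, Δ−2. Then for every proper edge-coloring c of G^Δ, the number of distinct palettes occurring among the vertices of G^Δ is strictly greater than (Δ/2)·(Δ−2). -/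
/-- Index of the pair containing `j`. -/
def pairIdx {Δ : ℕ} (hev : 2 ∣ Δ) (j : Fin Δ) : Fin (Δ / 2) :=
  ⟨j.1 / 2, by have := j.2; omega⟩

lemma mem_spoke {Δ : ℕ} (t : Fin (Δ - 2)) (j : Fin Δ) (x : Fin (Δ - 2) × Option (Fin Δ)) :
    x ∈ Gends Δ ⟨t, Sum.inl j⟩ ↔ x = (t, none) ∨ x = (t, some j) := by
  simp [Gends, Hends]

lemma mem_par {Δ : ℕ} (t : Fin (Δ - 2)) (i : Fin (Δ / 2)) (k : Fin (t.1 + 1))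
    (x : Fin (Δ - 2) × Option (Fin Δ)) :
    x ∈ Gends Δ ⟨t, Sum.inr (i, k)⟩ ↔ x = (t, some ⟨2 * i.1, by have := i.2; omega⟩) ∨
      x = (t, some ⟨2 * i.1 + 1, by have := i.2; omega⟩) := by
  simp [Gends, Hends]

lemma mem_par' {Δ : ℕ} (hev : 2 ∣ Δ) (t : Fin (Δ - 2)) (i : Fin (Δ / 2)) (k : Fin (t.1 + 1))
    (s : Fin (Δ - 2)) (j : Fin Δ) :
    (s, some j) ∈ Gends Δ ⟨t, Sum.inr (i, k)⟩ ↔ s = t ∧ i = pairIdx hev j := by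
  rw [mem_par]
  simp only [Prod.mk.injEq, Option.some.injEq, Fin.ext_iff, pairIdx]
  omega

lemma palette_none {Δ : ℕ} {C : Type*}
    (c : (Σ t : Fin (Δ - 2), (Fin Δ ⊕ Fin (Δ / 2) × Fin (t.1 + 1))) → C) (t : Fin (Δ - 2)) :
    MG.palette (Gends Δ) c (t, none) = Set.range (fun j => c ⟨t, Sum.inl j⟩) := by
  ext γ
  constructor
  · rintro ⟨⟨s, j | ⟨i, k⟩⟩, h, rfl⟩
    · rw [mem_spoke] at h
      have : t = s := by simpa using h
      subst this
      exact ⟨j, rfl⟩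
    · rw [mem_par] at h
      simp at h
  · rintro ⟨j, rfl⟩
    exact ⟨_, (mem_spoke _ _ _).2 (Or.inl rfl), rfl⟩

lemma palette_some {Δ : ℕ} (hev : 2 ∣ Δ) {C : Type*}
    (c : (Σ t : Fin (Δ - 2), (Fin Δ ⊕ Fin (Δ / 2) × Fin (t.1 + 1))) → C) (t : Fin (Δ - 2))
    (j : Fin Δ) :
    MG.palette (Gends Δ) c (t, some j) = Set.range (fun o : Option (Fin (t.1 + 1)) =>
      o.elim (c ⟨t, Sum.inl j⟩) (fun k => c ⟨t, Sum.inr (pairIdx hev j, k)⟩)) := by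
  ext γ
  constructor
  · rintro ⟨⟨s, j' | ⟨i, k⟩⟩, h, rfl⟩
    · rw [mem_spoke] at h
      have : t = s ∧ j = j' := by simpa using h
      obtain ⟨rfl, rfl⟩ := this
      exact ⟨none, rfl⟩
    · rw [mem_par' hev] at h
      obtain ⟨rfl, rfl⟩ := h
      exact ⟨some k, rfl⟩
  · rintro ⟨_ | k, rfl⟩
    · exact ⟨_, (mem_spoke _ _ _).2 (Or.inr rfl), rfl⟩
    · exact ⟨_, (mem_par' hev _ _ _ _ _).2 ⟨rfl, rfl⟩, rfl⟩

lemma ncard_none {Δ : ℕ} {C : Type*}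
    (c : (Σ t : Fin (Δ - 2), (Fin Δ ⊕ Fin (Δ / 2) × Fin (t.1 + 1))) → C)
    (hc : MG.Proper (Gends Δ) c) (t : Fin (Δ - 2)) :
    Function.Injective (fun j : Fin Δ => c ⟨t, Sum.inl j⟩) ∧
    (MG.palette (Gends Δ) c (t, none)).ncard = Δ := by
  have hinj : Function.Injective (fun j : Fin Δ => c ⟨t, Sum.inl j⟩) := by
    intro j j' h
    by_contra hne
    exact hc ⟨t, Sum.inl j⟩ ⟨t, Sum.inl j'⟩ (by simpa using hne)
      ⟨(t, none), (mem_spoke _ _ _).2 (Or.inl rfl), (mem_spoke _ _ _).2 (Or.inl rfl)⟩ h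
  refine ⟨hinj, ?_⟩
  rw [palette_none, ← Set.image_univ, Set.ncard_image_of_injective _ hinj, Set.ncard_univ]
  simp

lemma ncard_some {Δ : ℕ} (hev : 2 ∣ Δ) {C : Type*}
    (c : (Σ t : Fin (Δ - 2), (Fin Δ ⊕ Fin (Δ / 2) × Fin (t.1 + 1))) → C)
    (hc : MG.Proper (Gends Δ) c) (t : Fin (Δ - 2)) (j : Fin Δ) :
    (∀ k, c ⟨t, Sum.inl j⟩ ≠ c ⟨t, Sum.inr (pairIdx hev j, k)⟩) ∧
    (MG.palette (Gends Δ) c (t, some j)).ncard = t.1 + 2 := by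
  have h1 : ∀ k, c ⟨t, Sum.inl j⟩ ≠ c ⟨t, Sum.inr (pairIdx hev j, k)⟩ := by
    intro k
    exact hc _ _ (by simp) ⟨(t, some j), (mem_spoke _ _ _).2 (Or.inr rfl),
      (mem_par' hev _ _ _ _ _).2 ⟨rfl, rfl⟩⟩
  refine ⟨h1, ?_⟩
  have hinj : Function.Injective (fun o : Option (Fin (t.1 + 1)) =>
      o.elim (c ⟨t, Sum.inl j⟩) (fun k => c ⟨t, Sum.inr (pairIdx hev j, k)⟩)) := by
    rintro (_ | k) (_ | k') h
    · rfl
    · exact absurd h (h1 k')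
    · exact absurd h.symm (h1 k)
    · by_contra hne
      exact hc ⟨t, Sum.inr (pairIdx hev j, k)⟩ ⟨t, Sum.inr (pairIdx hev j, k')⟩
        (by simpa using hne) ⟨(t, some j), (mem_par' hev _ _ _ _ _).2 ⟨rfl, rfl⟩,
          (mem_par' hev _ _ _ _ _).2 ⟨rfl, rfl⟩⟩ h
  rw [palette_some hev, ← Set.image_univ, Set.ncard_image_of_injective _ hinj, Set.ncard_univ]
  simp

/-- Each component has at least `Δ / 2` distinct palettes at its non-central vertices:
differences of indicator vectors of palettes of partners are independent. -/
lemma component_bound {Δ : ℕ} (hev : 2 ∣ Δ) {C : Type*}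
    (c : (Σ t : Fin (Δ - 2), (Fin Δ ⊕ Fin (Δ / 2) × Fin (t.1 + 1))) → C)
    (hc : MG.Proper (Gends Δ) c) (t : Fin (Δ - 2)) :
    Δ / 2 ≤ (Set.range fun j : Fin Δ => MG.palette (Gends Δ) c (t, some j)).ncard := by
  classical
  let ev : Fin (Δ / 2) → Fin Δ := fun i => ⟨2 * i.1, by have := i.2; omega⟩
  let od : Fin (Δ / 2) → Fin Δ := fun i => ⟨2 * i.1 + 1, by have := i.2; omega⟩
  have hpe : ∀ i, pairIdx hev (ev i) = i := by
    intro i; ext; simp [pairIdx, ev]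
  have hpo : ∀ i, pairIdx hev (od i) = i := by
    intro i; ext; simp only [pairIdx, od]; omega
  have hinj := (ncard_none c hc t).1
  let w : Set C → (Fin (Δ / 2) → ℚ) := fun P i => if c ⟨t, Sum.inl (ev i)⟩ ∈ P then 1 else 0
  have hdiff : ∀ i, w (MG.palette (Gends Δ) c (t, some (ev i)))
      - w (MG.palette (Gends Δ) c (t, some (od i))) = Pi.single i 1 := by
    intro i
    ext i'
    have hE : c ⟨t, Sum.inl (ev i')⟩ ∈ MG.palette (Gends Δ) c (t, some (ev i)) ↔
        i' = i ∨ ∃ k, c ⟨t, Sum.inr (i, k)⟩ = c ⟨t, Sum.inl (ev i')⟩ := by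
      rw [palette_some hev, hpe]
      simp only [Set.mem_range, Option.exists, Option.elim]
      refine or_congr ⟨fun h => ?_, fun h => by rw [h]⟩ Iff.rfl
      have := hinj h
      simp only [ev, Fin.mk.injEq] at this
      ext; omega
    have hO : c ⟨t, Sum.inl (ev i')⟩ ∈ MG.palette (Gends Δ) c (t, some (od i)) ↔
        ∃ k, c ⟨t, Sum.inr (i, k)⟩ = c ⟨t, Sum.inl (ev i')⟩ := by
      rw [palette_some hev, hpo]
      simp only [Set.mem_range, Option.exists, Option.elim]
      refine or_iff_right fun h => ?_
      have := hinj h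
      simp only [ev, od, Fin.mk.injEq] at this
      omega
    simp only [Pi.sub_apply, w, hE, hO]
    by_cases h : i' = i
    · subst h
      have hn : ¬ ∃ k, c ⟨t, Sum.inr (i', k)⟩ = c ⟨t, Sum.inl (ev i')⟩ := by
        rintro ⟨k, hk⟩
        have := (ncard_some hev c hc t (ev i')).1 k
        rw [hpe] at this
        exact this hk.symm
      simp [hn]
    · simp [h]
  let S : Finset (Set C) := Finset.univ.image fun j : Fin Δ => MG.palette (Gends Δ) c (t, some j)
  have hS : (Set.range fun j : Fin Δ => MG.palette (Gends Δ) c (t, some j)) = (S : Set (Set C)) := by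
    simp [S]
  rw [hS, Set.ncard_coe_finset]
  have hspan : Submodule.span ℚ ((S.image w : Finset _) : Set (Fin (Δ / 2) → ℚ)) = ⊤ := by
    rw [eq_top_iff, ← (Pi.basisFun ℚ (Fin (Δ / 2))).span_eq, Submodule.span_le]
    rintro _ ⟨i, rfl⟩
    rw [Pi.basisFun_apply, ← hdiff i]
    refine Submodule.sub_mem _ (Submodule.subset_span ?_) (Submodule.subset_span ?_)
    · exact Finset.mem_image_of_mem _ (Finset.mem_image_of_mem _ (Finset.mem_univ _))
    · exact Finset.mem_image_of_mem _ (Finset.mem_image_of_mem _ (Finset.mem_univ _))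
  have h1 := finrank_span_finset_le_card (R := ℚ) (S.image w)
  rw [Set.finrank, hspan, finrank_top, Module.finrank_fin_fun] at h1
  exact h1.trans Finset.card_image_le

/-- every proper edge-coloring of `G^Δ` (Δ ≥ 4 even) has more
than `(Δ/2)·(Δ−2)` distinct palettes. -/
theorem palettes_G_lower_bound {Δ : ℕ} (hΔ : 4 ≤ Δ) (hev : 2 ∣ Δ) {C : Type*}
    (c : (Σ t : Fin (Δ - 2), (Fin Δ ⊕ Fin (Δ / 2) × Fin (t.1 + 1))) → C)
    (hc : MG.Proper (Gends Δ) c) :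
    Δ / 2 * (Δ - 2) <
      {P : Set C | ∃ x : Fin (Δ - 2) × Option (Fin Δ),
        MG.palette (Gends Δ) c x = P}.ncard := by
  classical
  let S : Fin (Δ - 2) → Finset (Set C) := fun t =>
    Finset.univ.image fun j : Fin Δ => MG.palette (Gends Δ) c (t, some j)
  have hcard : ∀ t, Δ / 2 ≤ (S t).card := by
    intro t
    have := component_bound hev c hc t
    have hS : (Set.range fun j : Fin Δ => MG.palette (Gends Δ) c (t, some j))
        = (S t : Set (Set C)) := by
      simp [S]
    rwa [hS, Set.ncard_coe_finset] at this
  have hsz : ∀ t, ∀ P ∈ S t, P.ncard = t.1 + 2 := by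
    intro t P hP
    obtain ⟨j, -, rfl⟩ := Finset.mem_image.1 hP
    exact (ncard_some hev c hc t j).2
  let t0 : Fin (Δ - 2) := ⟨0, by omega⟩
  let P0 := MG.palette (Gends Δ) c (t0, none)
  have hP0 : P0.ncard = Δ := (ncard_none c hc t0).2
  have hnot : P0 ∉ Finset.univ.biUnion S := by
    intro h
    obtain ⟨t, -, ht⟩ := Finset.mem_biUnion.1 h
    have := hsz t _ ht
    have := t.2
    omega
  have hdisj : (Finset.univ.biUnion S).card = ∑ t, (S t).card := by
    apply Finset.card_biUnion
    intro s _ t _ hst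
    refine Finset.disjoint_left.2 ?_
    intro P hs ht
    have h1 := hsz s P hs
    have h2 := hsz t P ht
    apply hst
    ext; omega
  have hsum : Δ / 2 * (Δ - 2) ≤ ∑ t, (S t).card := by
    have := Finset.card_nsmul_le_sum Finset.univ (fun t => (S t).card) (Δ / 2) (fun t _ => hcard t)
    simpa [mul_comm] using this
  have hsub : ((insert P0 (Finset.univ.biUnion S) : Finset (Set C)) : Set (Set C)) ⊆
      {P : Set C | ∃ x : Fin (Δ - 2) × Option (Fin Δ), MG.palette (Gends Δ) c x = P} := by
    intro P hP
    rcases Finset.mem_insert.1 (Finset.mem_coe.1 hP) with rfl | h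
    · exact ⟨_, rfl⟩
    · obtain ⟨t, -, ht⟩ := Finset.mem_biUnion.1 h
      obtain ⟨j, -, rfl⟩ := Finset.mem_image.1 ht
      exact ⟨_, rfl⟩
  have hle := Set.ncard_le_ncard hsub (Set.finite_range _)
  rw [Set.ncard_coe_finset, Finset.card_insert_of_notMem hnot, hdisj] at hle
  omega
end

section
/- There exists a proper edge-coloring of the complete bipartite graph K_{5,6} using exactly 8 colors such that exactly 6 distinct palettes occur among the 11 vertices. Explicitly, with bipartition classes {u_1,…,u_5} and {v_1,…,v_6}, assigning to the edge u_i v_j the (i,j) entry of the matrix M' = [[1,2,3,4,5,6],[3,1,2,6,4,5],[2,3,1,5,6,4],[4,5,7,8,1,2],[5,4,8,7,2,1]] yields such a coloring. -/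
/-- A proper edge-coloring of a simple graph: distinct edges sharing a vertex
receive distinct colors. -/
def SG.Proper {V C : Type*} (G : SimpleGraph V) (c : G.edgeSet → C) : Prop :=
  ∀ e₁ e₂ : G.edgeSet, e₁ ≠ e₂ → (∃ x : V, x ∈ e₁.1 ∧ x ∈ e₂.1) → c e₁ ≠ c e₂

/-- The palette of a vertex: the set of colors of the edges incident with it. -/
def SG.palette {V C : Type*} (G : SimpleGraph V) (c : G.edgeSet → C) (x : V) : Set C :=
  {γ : C | ∃ e : G.edgeSet, x ∈ e.1 ∧ c e = γ}

/-- The matrix `M'` of colors: entry `(i,j)` is the color of the edge `u_i v_j`. -/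
def Mcol : Fin 5 → Fin 6 → ℕ :=
  ![![1, 2, 3, 4, 5, 6],
    ![3, 1, 2, 6, 4, 5],
    ![2, 3, 1, 5, 6, 4],
    ![4, 5, 7, 8, 1, 2],
    ![5, 4, 8, 7, 2, 1]]

/-- The color assignment extended symmetrically to pairs of vertices of
`K_{5,6}`. -/
def gcol : Fin 5 ⊕ Fin 6 → Fin 5 ⊕ Fin 6 → ℕ
  | Sum.inl i, Sum.inr j => Mcol i j
  | Sum.inr j, Sum.inl i => Mcol i j
  | _, _ => 0

/-- The induced coloring on unordered pairs. -/
def ccol : Sym2 (Fin 5 ⊕ Fin 6) → ℕ :=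
  Sym2.lift ⟨gcol, by intro x y; rcases x with i | j <;> rcases y with i' | j' <;> rfl⟩

/-- Palettes as finsets. -/
def palFin : Fin 5 ⊕ Fin 6 → Finset ℕ
  | Sum.inl i => Finset.univ.image (fun j => Mcol i j)
  | Sum.inr j => Finset.univ.image (fun i => Mcol i j)

/-- Every edge of `K_{5,6}` has the form `u_i v_j`. -/
lemma edge_form (e : (completeBipartiteGraph (Fin 5) (Fin 6)).edgeSet) :
    ∃ i j, e.1 = s(Sum.inl i, Sum.inr j) := by
  obtain ⟨e, he⟩ := e
  induction e using Sym2.ind with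
  | _ x y =>
    rcases x with i | j <;> rcases y with i' | j' <;> simp at he
    · exact ⟨i, j', rfl⟩
    · exact ⟨i', j, Sym2.eq_swap⟩

/-- The edge `u_i v_j`. -/
def mkEdge (i : Fin 5) (j : Fin 6) : (completeBipartiteGraph (Fin 5) (Fin 6)).edgeSet :=
  ⟨s(Sum.inl i, Sum.inr j), by simp⟩

lemma ccol_mk (i : Fin 5) (j : Fin 6) : ccol s(Sum.inl i, Sum.inr j) = Mcol i j := rfl

lemma row_inj : ∀ i j j', Mcol i j = Mcol i j' → j = j' := by decide

lemma col_inj : ∀ j i i', Mcol i j = Mcol i' j → i = i' := by decide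

lemma palette_eq (x : Fin 5 ⊕ Fin 6) :
    SG.palette (completeBipartiteGraph (Fin 5) (Fin 6)) (fun e => ccol e.1) x
      = (palFin x : Set ℕ) := by
  ext γ
  constructor
  · rintro ⟨e, hx, rfl⟩
    obtain ⟨i, j, h⟩ := edge_form e
    simp only [h, ccol_mk] at hx ⊢
    rcases x with a | b
    · obtain rfl : a = i := by simpa using hx
      simp [palFin]
    · obtain rfl : b = j := by simpa using hx
      simp [palFin]
  · intro h
    rcases x with a | b
    · obtain ⟨j, hj⟩ : ∃ j, Mcol a j = γ := by simpa [palFin] using h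
      exact ⟨mkEdge a j, by simp [mkEdge], hj⟩
    · obtain ⟨i, hi⟩ : ∃ i, Mcol i b = γ := by simpa [palFin] using h
      exact ⟨mkEdge i b, by simp [mkEdge], hi⟩

/-- assigning to the edge `u_i v_j` of `K_{5,6}` the `(i,j)`
entry of the matrix `M'` yields a proper edge-coloring using exactly `8`
colors in which exactly `6` distinct palettes occur. -/
theorem K56_eight_colors_six_palettes :
    SG.Proper (completeBipartiteGraph (Fin 5) (Fin 6))
      (fun e => ccol e.1) ∧
    {γ : ℕ | ∃ e : (completeBipartiteGraph (Fin 5) (Fin 6)).edgeSet, ccol e.1 = γ}.ncard = 8 ∧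
    {P : Set ℕ | ∃ x : Fin 5 ⊕ Fin 6,
      SG.palette (completeBipartiteGraph (Fin 5) (Fin 6)) (fun e => ccol e.1) x = P}.ncard
      = 6 := by
  refine ⟨?_, ?_, ?_⟩
  · rintro e₁ e₂ hne ⟨x, h1, h2⟩ hc
    apply hne
    obtain ⟨i, j, h⟩ := edge_form e₁
    obtain ⟨i', j', h'⟩ := edge_form e₂
    apply Subtype.ext
    simp only [h, h', ccol_mk] at h1 h2 hc ⊢
    rcases x with a | b
    · obtain rfl : a = i := by simpa using h1
      obtain rfl : a = i' := by simpa using h2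
      rw [row_inj _ _ _ hc]
    · obtain rfl : b = j := by simpa using h1
      obtain rfl : b = j' := by simpa using h2
      rw [col_inj _ _ _ hc]
  · have : {γ : ℕ | ∃ e : (completeBipartiteGraph (Fin 5) (Fin 6)).edgeSet, ccol e.1 = γ}
        = ((Finset.univ.image (fun p : Fin 5 × Fin 6 => Mcol p.1 p.2) : Finset ℕ) : Set ℕ) := by
      ext γ
      constructor
      · rintro ⟨e, rfl⟩
        obtain ⟨i, j, h⟩ := edge_form e
        simp only [h, ccol_mk]
        exact Finset.mem_coe.2 (Finset.mem_image.2 ⟨(i, j), Finset.mem_univ _, rfl⟩)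
      · intro h
        obtain ⟨p, -, hp⟩ := Finset.mem_image.1 (Finset.mem_coe.1 h)
        exact ⟨mkEdge p.1 p.2, hp⟩
    rw [this, Set.ncard_coe_finset]
    decide
  · have : {P : Set ℕ | ∃ x : Fin 5 ⊕ Fin 6,
        SG.palette (completeBipartiteGraph (Fin 5) (Fin 6)) (fun e => ccol e.1) x = P}
        = (fun s : Finset ℕ => (s : Set ℕ)) ''
          ((Finset.univ.image palFin : Finset (Finset ℕ)) : Set (Finset ℕ)) := by
      ext P
      simp only [palette_eq, Set.mem_setOf_eq, Set.mem_image, Finset.mem_coe, Finset.mem_image,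
        Finset.mem_univ, true_and, exists_exists_eq_and]
    rw [this, Set.ncard_image_of_injective _ Finset.coe_injective, Set.ncard_coe_finset]
    decide +kernel
end
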